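/- arXiv:math/0212251 — 3 statements merged into one kernel-verified Lean document; each statement's English description precedes it below -/
import Mathlib

section
/- Let f ∈ L²(ℝ^d) admit an expansion f = Σ_{i=1}^∞ a_i φ_i + u, where each φ_i is a multivariate Gaussian function normalized to unit L² norm, Σ_{i=1}^∞ |a_i| = K < ∞, ‖u‖ ≤ ε, and ‖f‖ ≤ 1. Let D = {K φ_i : i ∈ ℕ} ∪ {−K φ_i : i ∈ ℕ} be the dictionary of signed rescaled Gaussians from the expansion. Let (f_n)_{n≥0} be any sequence in L²(ℝ^d) with f_0 arbitrary such that for every n, ‖f_{n+1} − f‖² ≤ inf_{λ∈[0,1], φ∈D} ‖(1−λ) f_n + λ φ − f‖². Then for every α ∈ (0,1) and every n ≥ 1, the error ε_n := ‖f_n − f‖ satisfies ε_n² ≤ max{ ((K+1)/α)² / n , ε² / (1−α)² }. -/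
/-!
The argument takes place in an abstract real inner product space. Write `h = fₙ - f`, `e = ‖h‖` and
`M = K + 1`. Since `f - u` lies in the closed convex hull of the dictionary, some dictionary element
`g` satisfies `⟪h, g⟫ ≤ ⟪h, f - u⟫` (`exists_dictionary_inner_le`), hence `⟪h, g - f⟫ ≤ e ε`, while
`‖g - f‖ ≤ M`. Expanding the square, `eₙ₊₁² ≤ (1-λ)² e² + 2 λ (1-λ) e ε + λ² M²` for all
`λ ∈ [0, 1]`. As long as `ε ≤ (1-α) e`, the right side is at most `(1-αλ)² e² + λ² M²`, and with
`A = (M/α)²` the optimal `λ` gives `eₙ₊₁² ≤ A e² / (A + e²)` (`greedy_step_bound`), that is,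
`1/eₙ₊₁² ≥ 1/e² + 1/A`. The bound `A / n` follows by induction; once `e ≤ ε / (1-α)`, the choice
`λ = 0` shows that the error stays there.
-/

open MeasureTheory Matrix

/-- An element of `L²(ℝ^d)` is a unit-norm multivariate Gaussian if it is a.e. equal to
`x ↦ c · exp(−½ (x−C)ᵀ B (x−C))` with `B` positive definite (precision matrix),
`C ∈ ℝ^d` (center) and `c > 0` a normalizing constant, and its `L²` norm equals `1`. -/
def IsUnitGaussianLp {d : ℕ}
    (φ : Lp ℝ 2 (volume : Measure (EuclideanSpace ℝ (Fin d)))) : Prop :=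
  ∃ (c : ℝ) (B : Matrix (Fin d) (Fin d) ℝ) (C : EuclideanSpace ℝ (Fin d)),
    0 < c ∧ B.PosDef ∧
    (∀ᵐ x ∂(volume : Measure (EuclideanSpace ℝ (Fin d))),
      φ x = c * Real.exp (-(1/2) *
        ((fun i => x i - C i) ⬝ᵥ B.mulVec (fun i => x i - C i)))) ∧
    ‖φ‖ = 1

open scoped InnerProductSpace

/-- Some element of the dictionary `{±K φᵢ}` does at least as well as `v = Σ aᵢ φᵢ` in the
direction `-h`. The minimum over the dictionary need not be attained, but a dictionary whose elements
all did strictly worse would contradict `|⟪h, v⟫| ≤ Σ |aᵢ| |⟪h, φᵢ⟫|`. -/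
lemma exists_dictionary_inner_le {E : Type*} [NormedAddCommGroup E] [InnerProductSpace ℝ E]
    {a : ℕ → ℝ} {φ : ℕ → E} {K : ℝ} {v : E} (hK : HasSum (fun i => |a i|) K)
    (hv : HasSum (fun i => a i • φ i) v) (h : E) :
    ∃ i, ⟪h, K • φ i⟫_ℝ ≤ ⟪h, v⟫_ℝ ∨ ⟪h, -(K • φ i)⟫_ℝ ≤ ⟪h, v⟫_ℝ := by
  by_contra! hcon
  have hK0 : 0 ≤ K := hK.nonneg fun i => abs_nonneg _
  have hin : HasSum (fun i => a i * ⟪h, φ i⟫_ℝ) ⟪h, v⟫_ℝ := by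
    simpa [inner_smul_right] using hv.mapL (innerSL ℝ h)
  have hlt : ∀ i, K * |⟪h, φ i⟫_ℝ| < -⟪h, v⟫_ℝ := by
    intro i
    obtain ⟨h1, h2⟩ := hcon i
    rw [inner_neg_right] at h2
    rw [inner_smul_right] at h1 h2
    rcases abs_cases ⟪h, φ i⟫_ℝ with ⟨h3, -⟩ | ⟨h3, -⟩ <;> rw [h3] <;> linarith
  have hterm : ∀ i, -(K * (a i * ⟪h, φ i⟫_ℝ)) ≤ |a i| * (K * |⟪h, φ i⟫_ℝ|) := by
    intro i
    have h1 := neg_abs_le (a i * ⟪h, φ i⟫_ℝ)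
    rw [abs_mul] at h1
    nlinarith
  rcases hK0.eq_or_lt with hz | hpos
  · -- If `K = 0`, every coefficient vanishes and so does `v`.
    subst hz
    have ha : (fun i => |a i|) = 0 := (hasSum_zero_iff_of_nonneg fun i => abs_nonneg _).1 hK
    have ha' : ∀ i, a i = 0 := fun i => abs_eq_zero.1 (congrFun ha i)
    have h0 : ⟪h, v⟫_ℝ = 0 := hin.unique (by simp [ha', hasSum_zero])
    simpa [h0] using hlt 0
  · obtain ⟨j, hj⟩ : ∃ j, a j ≠ 0 := by
      by_contra! h0
      exact hpos.ne (HasSum.unique (by simp [h0, hasSum_zero]) hK)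
    have hsum := hasSum_lt (i := j)
      (fun i => (hterm i).trans (mul_le_mul_of_nonneg_left (hlt i).le (abs_nonneg (a i))))
      ((hterm j).trans_lt (mul_lt_mul_of_pos_left (hlt j) (abs_pos.2 hj)))
      (hin.mul_left K).neg (hK.mul_right _)
    linarith

/-- The one-step recursion: if `e'² ≤ (1-λ)² e² + 2 λ (1-λ) e ε + λ² M²` for all `λ ∈ [0, 1]`, and
the error is still large, `ε ≤ (1-α) e`, then `e'² ≤ A e² / (A + e²)` with `A = (M/α)²`. -/
lemma greedy_step_bound {x e ε M α : ℝ} (hM : 0 < M) (he : 0 ≤ e) (heM : e ≤ M) (hα : 0 < α)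
    (hα1 : α < 1) (hε : ε ≤ (1 - α) * e)
    (hx : ∀ l ∈ Set.Icc (0 : ℝ) 1,
      x ≤ (1 - l) ^ 2 * e ^ 2 + 2 * l * (1 - l) * (e * ε) + l ^ 2 * M ^ 2) :
    x ≤ (M / α) ^ 2 * e ^ 2 / ((M / α) ^ 2 + e ^ 2) := by
  have hd : 0 < M ^ 2 + α ^ 2 * e ^ 2 := by positivity
  -- This is the minimizer of `l ↦ (1 - α l)² e² + l² M²`.
  set l := α * e ^ 2 / (M ^ 2 + α ^ 2 * e ^ 2) with hl
  have hl0 : 0 ≤ l := by positivity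
  have hl1 : l ≤ 1 := by
    rw [hl, div_le_one hd]
    have h1 : e ^ 2 ≤ M ^ 2 := by gcongr
    nlinarith [sq_nonneg e, mul_nonneg (sq_nonneg α) (sq_nonneg e)]
  have h1 : 2 * l * (1 - l) * (e * ε) ≤ 2 * l * (1 - l) * ((1 - α) * e ^ 2) := by
    apply mul_le_mul_of_nonneg_left _ (mul_nonneg (by positivity) (by linarith))
    nlinarith
  have h2 : x ≤ (1 - α * l) ^ 2 * e ^ 2 + l ^ 2 * M ^ 2 := by
    have h3 := hx l ⟨hl0, hl1⟩
    -- After inserting `h1` the bound holds with slack `(l (1 - α) e)²`.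
    nlinarith [sq_nonneg (l * (1 - α) * e)]
  refine h2.trans_eq ?_
  rw [hl]
  field_simp
  ring

/-- The greedy error bound in an arbitrary real inner product space. -/
lemma greedy_error_bound_inner {E : Type*} [NormedAddCommGroup E] [InnerProductSpace ℝ E]
    {f u : E} {a : ℕ → ℝ} {φ : ℕ → E} {K ε : ℝ} (hφ : ∀ i, ‖φ i‖ = 1)
    (hK : HasSum (fun i => |a i|) K) (hexp : HasSum (fun i => a i • φ i) (f - u))
    (hu : ‖u‖ ≤ ε) (hf : ‖f‖ ≤ 1) {D : Set E}
    (hD : D = (Set.range fun i => K • φ i) ∪ (Set.range fun i => -(K • φ i)))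
    {s : ℕ → E}
    (hs : ∀ n, ∀ l ∈ Set.Icc (0 : ℝ) 1, ∀ g ∈ D,
      ‖s (n + 1) - f‖ ^ 2 ≤ ‖(1 - l) • s n + l • g - f‖ ^ 2)
    {α : ℝ} (hα : 0 < α) (hα1 : α < 1) {n : ℕ} (hn : 1 ≤ n) :
    ‖s n - f‖ ^ 2 ≤ max (((K + 1) / α) ^ 2 / n) (ε ^ 2 / (1 - α) ^ 2) := by
  have hK0 : 0 ≤ K := hK.nonneg fun i => abs_nonneg _
  have hε0 : 0 ≤ ε := (norm_nonneg u).trans hu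
  have hgD : ∀ g ∈ D, ‖g - f‖ ≤ K + 1 := by
    intro g hg
    have hgK : ‖g‖ = K := by
      rw [hD] at hg
      rcases hg with ⟨i, rfl⟩ | ⟨i, rfl⟩ <;> simp [norm_smul, hφ, abs_of_nonneg hK0]
    linarith [norm_sub_le g f]
  have hmem : K • φ 0 ∈ D := by rw [hD]; exact Or.inl ⟨0, rfl⟩
  -- The choice `λ = 1` discards the previous approximant.
  have hbase : ∀ m, ‖s (m + 1) - f‖ ≤ K + 1 := by
    intro m
    have h1 := hs m 1 ⟨zero_le_one, le_rfl⟩ _ hmem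
    simp only [sub_self, zero_smul, zero_add, one_smul] at h1
    exact (le_of_pow_le_pow_left₀ two_ne_zero (norm_nonneg _) h1).trans (hgD _ hmem)
  have hmono : ∀ m, ‖s (m + 1) - f‖ ^ 2 ≤ ‖s m - f‖ ^ 2 := by
    intro m
    simpa using hs m 0 ⟨le_rfl, zero_le_one⟩ _ hmem
  have hquad : ∀ m, ∀ l ∈ Set.Icc (0 : ℝ) 1, ‖s (m + 1) - f‖ ^ 2 ≤
      (1 - l) ^ 2 * ‖s m - f‖ ^ 2 + 2 * l * (1 - l) * (‖s m - f‖ * ε) + l ^ 2 * (K + 1) ^ 2 := by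
    intro m l hl
    obtain ⟨g, hg, hgi⟩ : ∃ g ∈ D, ⟪s m - f, g⟫_ℝ ≤ ⟪s m - f, f - u⟫_ℝ := by
      obtain ⟨i, hi | hi⟩ := exists_dictionary_inner_le hK hexp (s m - f)
      · exact ⟨_, by rw [hD]; exact Or.inl ⟨i, rfl⟩, hi⟩
      · exact ⟨_, by rw [hD]; exact Or.inr ⟨i, rfl⟩, hi⟩
    have hinner : ⟪s m - f, g - f⟫_ℝ ≤ ‖s m - f‖ * ε := by
      have h1 : -⟪s m - f, u⟫_ℝ ≤ ‖s m - f‖ * ‖u‖ :=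
        (neg_le_abs _).trans (abs_real_inner_le_norm _ _)
      have h2 := mul_le_mul_of_nonneg_left hu (norm_nonneg (s m - f))
      rw [inner_sub_right] at hgi ⊢
      linarith
    have hsplit : (1 - l) • s m + l • g - f = (1 - l) • (s m - f) + l • (g - f) := by
      module
    have h3 := hs m l hl g hg
    rw [hsplit, norm_add_sq_real, norm_smul, norm_smul, mul_pow, mul_pow, inner_smul_left,
      inner_smul_right, Real.norm_eq_abs, Real.norm_eq_abs, sq_abs, sq_abs] at h3
    simp only [conj_trivial] at h3
    have h4 : ‖g - f‖ ^ 2 ≤ (K + 1) ^ 2 := by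
      gcongr
      exact hgD g hg
    have h5 := mul_le_mul_of_nonneg_left h4 (sq_nonneg l)
    have h6 := mul_le_mul_of_nonneg_left hinner
      (mul_nonneg (mul_nonneg zero_le_two hl.1) (sub_nonneg.2 hl.2))
    linarith
  have h1α : 0 < 1 - α := by linarith
  induction n, hn using Nat.le_induction with
  | base =>
    refine le_max_of_le_left ?_
    rw [Nat.cast_one, div_one]
    have h1 : K + 1 ≤ (K + 1) / α := by
      rw [le_div_iff₀ hα]
      nlinarith
    have h2 := (hbase 0).trans h1
    gcongr
  | succ m hm ih =>
    by_cases hE : ‖s m - f‖ ^ 2 ≤ ε ^ 2 / (1 - α) ^ 2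
    · exact le_max_of_le_right ((hmono m).trans hE)
    · have hA : ‖s m - f‖ ^ 2 ≤ ((K + 1) / α) ^ 2 / m := (le_max_iff.1 ih).resolve_right hE
      have hεe : ε ≤ (1 - α) * ‖s m - f‖ := by
        rw [not_le, ← div_pow] at hE
        have h1 := lt_of_pow_lt_pow_left₀ 2 (norm_nonneg _) hE
        rw [div_lt_iff₀ h1α] at h1
        linarith
      have hem : ‖s m - f‖ ≤ K + 1 := by
        obtain ⟨k, rfl⟩ := Nat.exists_eq_add_of_le' hm
        exact hbase k
      refine le_max_of_le_left ((greedy_step_bound (by linarith) (norm_nonneg _) hem hα hα1 hεe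
        (hquad m)).trans ?_)
      have hApos : 0 < ((K + 1) / α) ^ 2 := by positivity
      have hm0 : (0 : ℝ) < m := by exact_mod_cast hm
      rw [le_div_iff₀ hm0] at hA
      push_cast
      rw [div_le_div_iff₀ (by positivity) (by positivity)]
      nlinarith

/-- **Relaxed greedy approximation by Gaussians, main theorem.**
If `f = Σᵢ aᵢ φᵢ + u` with unit-norm Gaussians `φᵢ`, `Σ |aᵢ| = K < ∞`, `‖u‖ ≤ ε`, `‖f‖ ≤ 1`,
and `(fₙ)` is any sequence whose squared error at each step is at most the infimum of
`‖(1−λ) fₙ + λ φ − f‖²` over `λ ∈ [0,1]` and `φ` in the dictionary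
`D = {±K φᵢ}`, then for every `α ∈ (0,1)` and `n ≥ 1`,
`‖fₙ − f‖² ≤ max ( ((K+1)/α)² / n , ε² / (1−α)² )`. -/
theorem greedy_gaussian_approximation_error_bound {d : ℕ}
    (f u : Lp ℝ 2 (volume : Measure (EuclideanSpace ℝ (Fin d))))
    (a : ℕ → ℝ) (φ : ℕ → Lp ℝ 2 (volume : Measure (EuclideanSpace ℝ (Fin d))))
    (K ε : ℝ)
    (hφ : ∀ i, IsUnitGaussianLp (φ i))
    (hK : HasSum (fun i => |a i|) K)
    (hexp : HasSum (fun i => a i • φ i) (f - u))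
    (hu : ‖u‖ ≤ ε)
    (hf : ‖f‖ ≤ 1)
    (D : Set (Lp ℝ 2 (volume : Measure (EuclideanSpace ℝ (Fin d)))))
    (hD : D = (Set.range fun i => K • φ i) ∪ (Set.range fun i => -(K • φ i)))
    (fseq : ℕ → Lp ℝ 2 (volume : Measure (EuclideanSpace ℝ (Fin d))))
    (hgreedy : ∀ n : ℕ, ‖fseq (n + 1) - f‖ ^ 2 ≤
      sInf {r : ℝ | ∃ lam ∈ Set.Icc (0 : ℝ) 1, ∃ g ∈ D,
        r = ‖(1 - lam) • fseq n + lam • g - f‖ ^ 2}) :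
    ∀ α ∈ Set.Ioo (0 : ℝ) 1, ∀ n : ℕ, 1 ≤ n →
      ‖fseq n - f‖ ^ 2 ≤ max (((K + 1) / α) ^ 2 / n) (ε ^ 2 / (1 - α) ^ 2) := by
  intro α hα n hn
  refine greedy_error_bound_inner (fun i => ?_) hK hexp hu hf hD (fun m l hl g hg => ?_)
    hα.1 hα.2 hn
  · obtain ⟨-, -, -, -, -, -, h⟩ := hφ i
    exact h
  · refine (hgreedy m).trans (csInf_le ⟨0, ?_⟩ ⟨l, hl, g, hg, rfl⟩)
    rintro r ⟨l', -, g', -, rfl⟩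
    positivity
end

section
/- Let f ∈ L²(ℝ^d) admit an expansion f = Σ_{i=1}^∞ a_i φ_i + u, where each φ_i is a multivariate Gaussian function normalized to unit L² norm, Σ_{i=1}^∞ |a_i| = K < ∞, ‖u‖ ≤ ε with ε > 0, and ‖f‖ ≤ 1. Let D = {K φ_i : i ∈ ℕ} ∪ {−K φ_i : i ∈ ℕ}, and let (f_n)_{n≥0} be any sequence in L²(ℝ^d) such that for every n, ‖f_{n+1} − f‖² ≤ inf_{λ∈[0,1], φ∈D} ‖(1−λ) f_n + λ φ − f‖². Then for every n ≥ 1, ‖f_n − f‖² ≤ ε² + 2(K+1)ε/√n + (K+1)²/n. -/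
/-!
The argument takes place in an arbitrary real inner product space. Put `M = K + 1` and
`r = fₙ - f`. For `g ∈ D` and `lam ∈ [0, 1]`,
`‖(1 - lam) fₙ + lam g - f‖² = (1 - lam)² ‖r‖² + 2 lam (1 - lam) ⟪r, g - f⟫ + lam² ‖g - f‖²`,
and `‖g - f‖ ≤ M`. Since `f - u = Σ aᵢ φᵢ` is an average of elements of `D` with weights
`|aᵢ| / K`, averaging over `g` replaces `⟪r, g - f⟫` by `⟪r, -u⟫ ≤ ε ‖r‖`. Hence
`‖fₙ₊₁ - f‖² ≤ (1 - lam)² ‖r‖² + 2 lam (1 - lam) ε ‖r‖ + lam² M²` (`greedy_step`).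
Choosing `lam = 1` at the first step and `lam = 1 / (n + 1)` at the later ones gives
`‖fₙ - f‖ ≤ ε + M / √n` by induction (`recursion_step`, `greedy_bound`); the stated bound is the
square of this one.
-/

open MeasureTheory Matrix

/-- A bound that is affine in `⟪r, g⟫` and holds at each `g = ±K φᵢ` also
holds at `h = Σ aᵢ φᵢ`, which lies in the closed convex hull of these points. -/
lemma le_of_forall_dictionary {E : Type*} [NormedAddCommGroup E] [InnerProductSpace ℝ E]
    {h r : E} {a : ℕ → ℝ} {φ : ℕ → E} {K A B c : ℝ}
    (hK : HasSum (fun i => |a i|) K) (hexp : HasSum (fun i => a i • φ i) h)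
    (hpos : ∀ i, c ≤ A + B * inner ℝ r (K • φ i))
    (hneg : ∀ i, c ≤ A + B * inner ℝ r (-(K • φ i))) :
    c ≤ A + B * inner ℝ r h := by
  have hK0 : 0 ≤ K := hK.nonneg fun i => abs_nonneg _
  have hin : HasSum (fun i => a i * inner ℝ r (φ i)) (inner ℝ r h) := by
    simpa [inner_smul_right] using hexp.mapL (innerSL ℝ r)
  simp only [inner_neg_right, inner_smul_right] at hpos hneg
  rcases hK0.eq_or_lt with rfl | hKpos
  · have ha : ∀ i, a i = 0 := fun i =>
      abs_eq_zero.1 (congrFun ((hasSum_zero_iff_of_nonneg fun i => abs_nonneg (a i)).1 hK) i)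
    have h0 : inner ℝ r h = 0 := hin.unique (by simp [ha])
    have := hpos 0
    rw [h0]
    linarith
  · have hterm : ∀ i, |a i| * (c - A) ≤ (B * K) * (a i * inner ℝ r (φ i)) := by
      intro i
      rcases abs_cases (a i) with ⟨he, hs⟩ | ⟨he, hs⟩ <;> rw [he]
      · nlinarith [mul_le_mul_of_nonneg_left (hpos i) hs]
      · nlinarith [mul_le_mul_of_nonneg_left (hneg i) (neg_nonneg.2 hs.le)]
    have hsum := hasSum_le hterm (hK.mul_right (c - A)) (hin.mul_left (B * K))
    have : K * (c - A) ≤ K * (B * inner ℝ r h) := by linarith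
    linarith [le_of_mul_le_mul_left this hKpos]

/-- One greedy step: the squared error decreases at least as much as the relaxation with any fixed
parameter `lam`. -/
lemma greedy_step {E : Type*} [NormedAddCommGroup E] [InnerProductSpace ℝ E]
    {f u x : E} {a : ℕ → ℝ} {φ : ℕ → E} {K ε c lam : ℝ}
    (hφ : ∀ i, ‖φ i‖ = 1) (hK : HasSum (fun i => |a i|) K)
    (hexp : HasSum (fun i => a i • φ i) (f - u)) (hu : ‖u‖ ≤ ε) (hf : ‖f‖ ≤ 1)
    (h0 : 0 ≤ lam) (h1 : lam ≤ 1)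
    (hpos : ∀ i, c ≤ ‖(1 - lam) • x + lam • (K • φ i) - f‖ ^ 2)
    (hneg : ∀ i, c ≤ ‖(1 - lam) • x + lam • (-(K • φ i)) - f‖ ^ 2) :
    c ≤ (1 - lam) ^ 2 * ‖x - f‖ ^ 2 + 2 * lam * (1 - lam) * (ε * ‖x - f‖)
      + lam ^ 2 * (K + 1) ^ 2 := by
  have hK0 : 0 ≤ K := hK.nonneg fun i => abs_nonneg _
  have hl : 0 ≤ 2 * lam * (1 - lam) := mul_nonneg (by linarith) (by linarith)
  have hexpand : ∀ g : E, ‖g‖ ≤ K → ‖(1 - lam) • x + lam • g - f‖ ^ 2 ≤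
      ((1 - lam) ^ 2 * ‖x - f‖ ^ 2 - 2 * lam * (1 - lam) * inner ℝ (x - f) f
        + lam ^ 2 * (K + 1) ^ 2) + 2 * lam * (1 - lam) * inner ℝ (x - f) g := by
    intro g hg
    have hd : (1 - lam) • x + lam • g - f = (1 - lam) • (x - f) + lam • (g - f) := by module
    have hgf : ‖g - f‖ ^ 2 ≤ (K + 1) ^ 2 := by
      have := norm_sub_le g f
      gcongr
      linarith
    have := mul_le_mul_of_nonneg_left hgf (sq_nonneg lam)
    rw [hd, norm_add_sq_real, norm_smul, norm_smul, mul_pow, mul_pow, Real.norm_eq_abs,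
      Real.norm_eq_abs, sq_abs, sq_abs, inner_smul_left, inner_smul_right, inner_sub_right]
    simp only [conj_trivial]
    linarith
  have hnorm : ∀ i, ‖K • φ i‖ ≤ K := fun i => by
    rw [norm_smul, hφ, Real.norm_eq_abs, abs_of_nonneg hK0, mul_one]
  have key := le_of_forall_dictionary (r := x - f) hK hexp
    (fun i => (hpos i).trans (hexpand _ (hnorm i)))
    (fun i => (hneg i).trans (hexpand _ (by rw [norm_neg]; exact hnorm i)))
  have hru : -inner ℝ (x - f) u ≤ ε * ‖x - f‖ := by
    have h2 := neg_le_of_abs_le (abs_real_inner_le_norm (x - f) u)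
    have h3 := mul_le_mul_of_nonneg_left hu (norm_nonneg (x - f))
    linarith
  have := mul_le_mul_of_nonneg_left hru hl
  rw [inner_sub_right] at key
  linarith

/-- With `s = √n` and `t = √(n + 1)`, the relaxation parameter `1 / t² = 1 / (n + 1)` turns the
error bound `ε + M / s` into `ε + M / t`. -/
lemma recursion_step {e ε M s t : ℝ} (he0 : 0 ≤ e) (hε : 0 ≤ ε) (hM : 0 ≤ M) (hs : 0 < s)
    (ht : 0 < t) (hst : t ^ 2 = s ^ 2 + 1) (he : e ≤ ε + M / s) :
    (1 - 1 / t ^ 2) ^ 2 * e ^ 2 + 2 * (1 / t ^ 2) * (1 - 1 / t ^ 2) * (ε * e)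
      + (1 / t ^ 2) ^ 2 * M ^ 2 ≤ (ε + M / t) ^ 2 := by
  have hle : s ≤ t := by nlinarith
  have hlam : 1 - 1 / t ^ 2 = s ^ 2 / t ^ 2 := by
    field_simp
    linarith
  have hmono : (1 - 1 / t ^ 2) ^ 2 * e ^ 2 + 2 * (1 / t ^ 2) * (1 - 1 / t ^ 2) * (ε * e)
      + (1 / t ^ 2) ^ 2 * M ^ 2 ≤
      (s ^ 2 / t ^ 2) ^ 2 * (ε + M / s) ^ 2
        + 2 * (1 / t ^ 2) * (s ^ 2 / t ^ 2) * (ε * (ε + M / s)) + (1 / t ^ 2) ^ 2 * M ^ 2 := by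
    rw [hlam]
    gcongr
  refine hmono.trans ?_
  -- The `M²` terms agree on both sides; the slack is in the `ε²` and `ε M` terms.
  have hdiff : (ε + M / t) ^ 2 - ((s ^ 2 / t ^ 2) ^ 2 * (ε + M / s) ^ 2
      + 2 * (1 / t ^ 2) * (s ^ 2 / t ^ 2) * (ε * (ε + M / s)) + (1 / t ^ 2) ^ 2 * M ^ 2)
      = ε ^ 2 / t ^ 4 + 2 * ε * M * (t - s) / t ^ 2 := by
    have h1 : s ^ 2 = t ^ 2 - 1 := by linarith
    have h4 : s ^ 4 = (t ^ 2 - 1) ^ 2 := by rw [← h1]; ring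
    have h3 : s ^ 3 = (t ^ 2 - 1) * s := by rw [← h1]; ring
    field_simp
    ring_nf
    simp only [h4, h3, h1]
    ring
  have : 0 ≤ ε ^ 2 / t ^ 4 + 2 * ε * M * (t - s) / t ^ 2 := by
    have := sub_nonneg.2 hle
    positivity
  linarith

lemma greedy_bound {e : ℕ → ℝ} {ε M : ℝ} (he0 : ∀ n, 0 ≤ e n) (hε : 0 ≤ ε) (hM : 0 ≤ M)
    (hstep : ∀ n, ∀ lam : ℝ, 0 ≤ lam → lam ≤ 1 → e (n + 1) ^ 2 ≤
      (1 - lam) ^ 2 * e n ^ 2 + 2 * lam * (1 - lam) * (ε * e n) + lam ^ 2 * M ^ 2)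
    (n : ℕ) (hn : 1 ≤ n) : e n ≤ ε + M / √n := by
  induction n, hn using Nat.le_induction with
  | base =>
    have h := hstep 0 1 zero_le_one le_rfl
    norm_num at h
    have := le_of_abs_le (abs_le_of_sq_le_sq h hM)
    norm_num
    linarith
  | succ n hn ih =>
    have hn' : (0 : ℝ) < n := by exact_mod_cast hn
    have ht2 : √((n + 1 : ℕ) : ℝ) ^ 2 = n + 1 := by
      rw [Real.sq_sqrt (by positivity)]
      push_cast
      rfl
    have hr := recursion_step (he0 n) hε hM (Real.sqrt_pos.2 hn')
      (t := √((n + 1 : ℕ) : ℝ)) (by positivity) (by rw [ht2, Real.sq_sqrt hn'.le]) ih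
    have h := (hstep n (1 / √((n + 1 : ℕ) : ℝ) ^ 2) (by positivity)
      (by rw [ht2, div_le_one (by positivity)]; linarith)).trans hr
    exact le_of_abs_le (abs_le_of_sq_le_sq h (by positivity))

/-- **Relaxed greedy approximation by Gaussians, second corollary (ε > 0).**
If `f = Σᵢ aᵢ φᵢ + u` with unit-norm Gaussians `φᵢ`, `Σ |aᵢ| = K < ∞`, `‖u‖ ≤ ε`, `ε > 0`,
`‖f‖ ≤ 1`, and `(fₙ)` is any relaxed greedy sequence over the dictionary `D = {±K φᵢ}`,
then for every `n ≥ 1`, `‖fₙ − f‖² ≤ ε² + 2(K+1)ε/√n + (K+1)²/n`. -/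
theorem greedy_gaussian_approximation_error_bound_of_pos_residual {d : ℕ}
    (f u : Lp ℝ 2 (volume : Measure (EuclideanSpace ℝ (Fin d))))
    (a : ℕ → ℝ) (φ : ℕ → Lp ℝ 2 (volume : Measure (EuclideanSpace ℝ (Fin d))))
    (K ε : ℝ) (hε : 0 < ε)
    (hφ : ∀ i, IsUnitGaussianLp (φ i))
    (hK : HasSum (fun i => |a i|) K)
    (hexp : HasSum (fun i => a i • φ i) (f - u))
    (hu : ‖u‖ ≤ ε)
    (hf : ‖f‖ ≤ 1)
    (D : Set (Lp ℝ 2 (volume : Measure (EuclideanSpace ℝ (Fin d)))))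
    (hD : D = (Set.range fun i => K • φ i) ∪ (Set.range fun i => -(K • φ i)))
    (fseq : ℕ → Lp ℝ 2 (volume : Measure (EuclideanSpace ℝ (Fin d))))
    (hgreedy : ∀ n : ℕ, ‖fseq (n + 1) - f‖ ^ 2 ≤
      sInf {r : ℝ | ∃ lam ∈ Set.Icc (0 : ℝ) 1, ∃ g ∈ D,
        r = ‖(1 - lam) • fseq n + lam • g - f‖ ^ 2}) :
    ∀ n : ℕ, 1 ≤ n →
      ‖fseq n - f‖ ^ 2 ≤
        ε ^ 2 + 2 * (K + 1) * ε / Real.sqrt n + (K + 1) ^ 2 / n := by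
  intro n hn
  have hK0 : 0 ≤ K := hK.nonneg fun i => abs_nonneg _
  have hnorm : ∀ i, ‖φ i‖ = 1 := fun i => by
    obtain ⟨_, _, _, _, _, _, h⟩ := hφ i
    exact h
  have hle : ∀ m, ∀ lam : ℝ, 0 ≤ lam → lam ≤ 1 → ∀ g ∈ D,
      ‖fseq (m + 1) - f‖ ^ 2 ≤ ‖(1 - lam) • fseq m + lam • g - f‖ ^ 2 := by
    intro m lam h0 h1 g hg
    refine (hgreedy m).trans (csInf_le ⟨0, ?_⟩ ⟨lam, ⟨h0, h1⟩, g, hg, rfl⟩)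
    rintro _ ⟨_, _, _, _, rfl⟩
    positivity
  have hb := greedy_bound (e := fun m => ‖fseq m - f‖) (fun m => norm_nonneg _) hε.le
    (by linarith : 0 ≤ K + 1)
    (fun m lam h0 h1 => greedy_step hnorm hK hexp hu hf h0 h1
      (fun i => hle m lam h0 h1 _ (by rw [hD]; exact Or.inl ⟨i, rfl⟩))
      (fun i => hle m lam h0 h1 _ (by rw [hD]; exact Or.inr ⟨i, rfl⟩))) n hn
  calc ‖fseq n - f‖ ^ 2 ≤ (ε + (K + 1) / √n) ^ 2 := by gcongr
    _ = ε ^ 2 + 2 * (K + 1) * ε / √n + (K + 1) ^ 2 / n := by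
      rw [add_sq, div_pow, Real.sq_sqrt (Nat.cast_nonneg n)]
      ring
end

section
/- Let K ≥ 0 and let ε, ε_n, ε_{n+1} be reals with 0 ≤ ε < ε_n, ε < K + 1, ε_{n+1} > 0, and ε_{n+1}² ≤ ε_n² · ((K+1)² − ε²) / ((K+1)² + ε_n² − 2 ε ε_n). Then ε_{n+1}^{-2} ≥ ε_n^{-2} + (1/(K+1)²) · (1 − ε/ε_n)². -/
/-- **Reciprocal squared error step of the greedy approximation theorem.**
If `εₙ₊₁² ≤ εₙ² ((K+1)² − ε²)/((K+1)² + εₙ² − 2 ε εₙ)` with `0 ≤ ε < εₙ`,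
`ε < K+1` and `εₙ₊₁ > 0`, then `εₙ₊₁⁻² ≥ εₙ⁻² + (1/(K+1)²) (1 − ε/εₙ)²`. -/
theorem inv_sq_error_step (K ε εn εn1 : ℝ) (hK : 0 ≤ K)
    (hε : 0 ≤ ε) (hεεn : ε < εn) (hεK : ε < K + 1) (hεn1 : 0 < εn1)
    (hstep : εn1 ^ 2 ≤ εn ^ 2 * ((K + 1) ^ 2 - ε ^ 2) /
      ((K + 1) ^ 2 + εn ^ 2 - 2 * ε * εn)) :
    (εn1 ^ 2)⁻¹ ≥ (εn ^ 2)⁻¹ + 1 / (K + 1) ^ 2 * (1 - ε / εn) ^ 2 := by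
  have hn : 0 < εn := hε.trans_lt hεεn
  have hC : 0 < (K + 1) ^ 2 - ε ^ 2 := by nlinarith
  -- The denominator of the contraction factor is `((K+1)² − ε²) + (εₙ − ε)²`, so the
  -- reciprocal of the bound splits as `εₙ⁻² + (εₙ − ε)² / (εₙ² ((K+1)² − ε²))`.
  have hD : (K + 1) ^ 2 + εn ^ 2 - 2 * ε * εn
      = ((K + 1) ^ 2 - ε ^ 2) + (εn - ε) ^ 2 := by ring
  rw [hD] at hstep
  have hinv := inv_anti₀ (by positivity : 0 < εn1 ^ 2) hstep
  have hle : 1 / (K + 1) ^ 2 ≤ 1 / ((K + 1) ^ 2 - ε ^ 2) :=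
    one_div_le_one_div_of_le hC (by nlinarith)
  calc (εn ^ 2)⁻¹ + 1 / (K + 1) ^ 2 * (1 - ε / εn) ^ 2
      ≤ (εn ^ 2)⁻¹ + 1 / ((K + 1) ^ 2 - ε ^ 2) * (1 - ε / εn) ^ 2 := by gcongr
    _ = (εn ^ 2 * ((K + 1) ^ 2 - ε ^ 2) / (((K + 1) ^ 2 - ε ^ 2) + (εn - ε) ^ 2))⁻¹ := by
        generalize (K + 1) ^ 2 - ε ^ 2 = C at hC
        rw [inv_div]
        field_simp
    _ ≤ (εn1 ^ 2)⁻¹ := hinv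
end
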